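/- Let q be a (1/e)-approximately log-concave probability density on ℝⁿ with mean μ(q) and positive definite covariance Cov(q). Then the ellipsoid 𝓔_q(1/100) = {x : ‖x − μ(q)‖_{Cov(q)^{-1}} ≤ 1/100} is contained in the support of q. -/

import Mathlib

open MeasureTheory ProbabilityTheory Real

noncomputable section

/-- A nonnegative function `g` is log-concave if it satisfies the pointwise
multiplicative concavity inequality (equivalently, `g = exp` of a concave
function, with the value `0 = exp (-∞)` allowed). -/
def IsLogConcave {E : Type*} [AddCommMonoid E] [SMul ℝ E] (g : E → ℝ) : Prop :=
  (∀ x, 0 ≤ g x) ∧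
    ∀ x y : E, ∀ a b : ℝ, 0 ≤ a → 0 ≤ b → a + b = 1 →
      g x ^ a * g y ^ b ≤ g (a • x + b • y)

/-- A density `p` is `ε`-approximately log-concave if there is a log-concave
function `g` with `ε • g ≤ p ≤ (1/ε) • g` pointwise. -/
def ApproxLogConcave {E : Type*} [AddCommMonoid E] [SMul ℝ E] (ε : ℝ) (p : E → ℝ) : Prop :=
  ∃ g : E → ℝ, IsLogConcave g ∧ ∀ x, ε * g x ≤ p x ∧ p x ≤ (1 / ε) * g x

/-- Mean (barycenter) of the probability density `p` on `ℝⁿ`. -/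
def densMean (n : ℕ) (p : EuclideanSpace ℝ (Fin n) → ℝ) : EuclideanSpace ℝ (Fin n) :=
  ∫ x, p x • x

/-- Covariance matrix of the probability density `p` on `ℝⁿ`. -/
def densCov (n : ℕ) (p : EuclideanSpace ℝ (Fin n) → ℝ) : Matrix (Fin n) (Fin n) ℝ :=
  Matrix.of fun i j => ∫ x, p x * ((x i - densMean n p i) * (x j - densMean n p j))

/-- The (Mahalanobis-type) norm `‖x‖_A = √(xᵀ A x)` associated with a matrix `A`. -/
def mahal (n : ℕ) (A : Matrix (Fin n) (Fin n) ℝ) (x : EuclideanSpace ℝ (Fin n)) : ℝ :=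
  Real.sqrt (∑ i, ∑ j, x i * A i j * x j)

/-- Density of the Gaussian measure `N(μ, S)` on `ℝⁿ`. -/
def gaussPdf (n : ℕ) (μ : EuclideanSpace ℝ (Fin n)) (S : Matrix (Fin n) (Fin n) ℝ)
    (x : EuclideanSpace ℝ (Fin n)) : ℝ :=
  (2 * π) ^ (-(n : ℝ) / 2) * S.det ^ (-(1 : ℝ) / 2) *
    Real.exp (-(1 / 2) * ∑ i, ∑ j, (x i - μ i) * S⁻¹ i j * (x j - μ j))

/-!
If `q x₀ = 0`, a half-space `{ℓ < ℓ x₀}` carries `q`, so `X = ℓ x₀ - ℓ` is affine and nonnegative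
on the support of `q`. Let `u` be the log-concave function comparable to `q`. As `X` is affine and
nonnegative, `X x ≤ 2 X z` at the midpoint `z` of `x` and `y`, hence
`(X x ^ 2 * u x) * u y ≤ (2 * X z * u z) ^ 2`, and the midpoint Prékopa–Leindler inequality gives
`(∫ X² u) (∫ u) ≤ 4 (∫ X u)²`. Passing from `u` to `q` costs a factor `ε⁻⁴`, so
`Var X ≤ (4 ε⁻⁴ - 1) (𝔼 X)²`. On the other hand, if `x₀` lies in the ellipsoid of radius `r`, the
Cauchy–Schwarz inequality gives `(𝔼 X)² ≤ r² Var X`, which is absurd as soon as `2 r ≤ ε²`.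
-/

open Function Set Module
open scoped ENNReal Matrix NNReal

section BrunnMinkowski

lemma volume_add_le_two_mul_of_isCompact {K L C : Set ℝ} (hK : IsCompact K) (hL : IsCompact L)
    (hK₀ : K.Nonempty) (hL₀ : L.Nonempty) (hC : ∀ x ∈ K, ∀ y ∈ L, midpoint ℝ x y ∈ C) :
    volume K + volume L ≤ 2 * volume C := by
  obtain ⟨k, hk, hk_max⟩ := hK.exists_isGreatest hK₀
  obtain ⟨l, hl, hl_min⟩ := hL.exists_isLeast hL₀
  -- The translates `K + l` and `L + k` meet only at `k + l`, and both lie in `2 • C`.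
  have hsub : (· - l) ⁻¹' K ∪ (· - k) ⁻¹' L ⊆ (2⁻¹ * ·) ⁻¹' C := by
    rintro z (hz | hz)
    · simpa [midpoint_eq_smul_add] using hC _ hz _ hl
    · simpa [midpoint_eq_smul_add] using hC _ hk _ hz
  have hdisj : AEDisjoint volume ((· - l) ⁻¹' K) ((· - k) ⁻¹' L) := by
    refine measure_mono_null (t := {k + l}) ?_ (by simp)
    rintro z ⟨hzK, hzL⟩
    have hzk : z - l ≤ k := hk_max hzK
    have hlz : l ≤ z - k := hl_min hzL
    exact mem_singleton_iff.2 (by linarith)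
  have hmeas : MeasurableSet ((· - k) ⁻¹' L) := (measurable_id.sub_const k) hL.measurableSet
  calc volume K + volume L
      = volume ((· - l) ⁻¹' K ∪ (· - k) ⁻¹' L) := by
        rw [measure_union₀ hmeas.nullMeasurableSet hdisj]
        simp only [sub_eq_add_neg, measure_preimage_add_right]
    _ ≤ volume ((2⁻¹ * ·) ⁻¹' C) := measure_mono hsub
    _ = 2 * volume C := by
        rw [Real.volume_preimage_mul_left (by norm_num)]
        norm_num

lemma volume_add_le_two_mul {A B C : Set ℝ} (hA : MeasurableSet A) (hB : MeasurableSet B)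
    (hA₀ : A.Nonempty) (hB₀ : B.Nonempty) (hC : ∀ x ∈ A, ∀ y ∈ B, midpoint ℝ x y ∈ C) :
    volume A + volume B ≤ 2 * volume C := by
  obtain ⟨a, ha⟩ := hA₀
  obtain ⟨b, hb⟩ := hB₀
  rw [hA.measure_eq_iSup_isCompact, hB.measure_eq_iSup_isCompact]
  simp only [iSup_and']
  refine ENNReal.biSup_add_biSup_le' (p := fun K => K ⊆ A ∧ IsCompact K)
    (q := fun L => L ⊆ B ∧ IsCompact L) ⟨∅, by simp⟩ ⟨∅, by simp⟩ ?_
  rintro K ⟨hKA, hK⟩ L ⟨hLB, hL⟩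
  calc volume K + volume L ≤ volume (insert a K) + volume (insert b L) := by
        gcongr <;> exact subset_insert _ _
    _ ≤ 2 * volume C := volume_add_le_two_mul_of_isCompact (hK.insert a) (hL.insert b)
        (insert_nonempty _ _) (insert_nonempty _ _)
        fun x hx y hy => hC x (insert_subset ha hKA hx) y (insert_subset hb hLB hy)

end BrunnMinkowski

section PrekopaLeindler

lemma antitone_measure_ofReal_lt {α : Type*} [MeasurableSpace α] (μ : Measure α) (u : α → ℝ≥0∞) :
    Antitone fun t : ℝ => μ {x | ENNReal.ofReal t < u x} :=
  fun _ _ hst => measure_mono fun _ hx => (ENNReal.ofReal_le_ofReal hst).trans_lt hx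

lemma lintegral_eq_lintegral_measure_ofReal_lt {α : Type*} [MeasurableSpace α] (μ : Measure α)
    {u : α → ℝ≥0∞} (hu : Measurable u) (hu_top : ∀ x, u x ≠ ∞) :
    ∫⁻ x, u x ∂μ = ∫⁻ t in Ioi (0 : ℝ), μ {x | ENNReal.ofReal t < u x} := by
  have hlayer := lintegral_eq_lintegral_meas_lt (f := fun x => (u x).toReal) μ
    (.of_forall fun _ => ENNReal.toReal_nonneg) hu.ennreal_toReal.aemeasurable
  simp only [ENNReal.ofReal_toReal (hu_top _)] at hlayer
  rw [hlayer]
  refine setLIntegral_congr_fun measurableSet_Ioi fun t ht => ?_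
  simp only [ENNReal.ofReal_lt_iff_lt_toReal (le_of_lt ht) (hu_top _)]

lemma lintegral_add_le_two_mul_of_min_le {f g h : ℝ → ℝ≥0∞} (hf : Measurable f)
    (hg : Measurable g) (hh : Measurable h) (hfg : ⨆ x, f x = ⨆ x, g x) (hf_top : ⨆ x, f x ≠ ∞)
    (hfgh : ∀ x y, min (f x) (g y) ≤ h (midpoint ℝ x y)) :
    (∫⁻ x, f x) + ∫⁻ x, g x ≤ 2 * ∫⁻ x, h x := by
  set s := ⨆ x, f x
  have hfs : ∀ x, f x ≤ s := le_iSup f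
  have hgs : ∀ x, g x ≤ s := fun x => hfg ▸ le_iSup g x
  have hlevel : ∀ t, volume {x | t < f x} + volume {x | t < g x} ≤
      2 * volume {x | t < min (h x) s} := fun t => by
    rcases lt_or_ge t s with ht | ht
    · exact volume_add_le_two_mul (measurableSet_lt measurable_const hf)
        (measurableSet_lt measurable_const hg) (lt_iSup_iff.1 ht) (lt_iSup_iff.1 (ht.trans_eq hfg))
        fun x hx y hy => lt_min ((lt_min hx hy).trans_le (hfgh x y)) ht
    · simp [((hfs _).trans ht).not_gt, ((hgs _).trans ht).not_gt]
  have hlayer : ∀ {u : ℝ → ℝ≥0∞}, Measurable u → (∀ x, u x ≤ s) →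
      ∫⁻ x, u x = ∫⁻ t in Ioi (0 : ℝ), volume {x | ENNReal.ofReal t < u x} := fun hu hus =>
    lintegral_eq_lintegral_measure_ofReal_lt volume hu fun x => ne_top_of_le_ne_top hf_top (hus x)
  calc (∫⁻ x, f x) + ∫⁻ x, g x ≤ 2 * ∫⁻ x, min (h x) s := by
        rw [hlayer hf hfs, hlayer hg hgs,
          hlayer (hh.min measurable_const) fun _ => min_le_right _ _,
          ← lintegral_add_left (antitone_measure_ofReal_lt volume f).measurable,
          ← lintegral_const_mul _ (antitone_measure_ofReal_lt volume _).measurable]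
        exact lintegral_mono fun _ => hlevel _
    _ ≤ 2 * ∫⁻ x, h x := by
        gcongr
        exact min_le_left _ _

/-- The Prékopa–Leindler inequality for the measure `μ`, with both weights equal to `1 / 2`. Both
the hypothesis and the conclusion are squared to avoid square roots. -/
def MidpointPrekopaLeindler {E : Type*} [AddCommGroup E] [Module ℝ E] [MeasurableSpace E]
    (μ : Measure E) : Prop :=
  ∀ f g h : E → ℝ≥0∞, Measurable f → Measurable g → Measurable h →
    (∀ x y, f x * g y ≤ h (midpoint ℝ x y) ^ 2) →
    (∫⁻ x, f x ∂μ) * ∫⁻ x, g x ∂μ ≤ (∫⁻ x, h x ∂μ) ^ 2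

lemma ennreal_four_mul_le_sq_add (x y : ℝ≥0∞) : 4 * x * y ≤ (x + y) ^ 2 := by
  induction x with
  | top => simp
  | coe x =>
    induction y with
    | top => simp
    | coe y => exact_mod_cast four_mul_le_sq_add x y

lemma lintegral_mul_lintegral_le_sq_of_iSup_ne_top {f g h : ℝ → ℝ≥0∞} (hf : Measurable f)
    (hg : Measurable g) (hh : Measurable h) (hf_top : ⨆ x, f x ≠ ∞) (hg_top : ⨆ x, g x ≠ ∞)
    (hfgh : ∀ x y, f x * g y ≤ h (midpoint ℝ x y) ^ 2) :
    (∫⁻ x, f x) * ∫⁻ x, g x ≤ (∫⁻ x, h x) ^ 2 := by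
  set a := ⨆ x, f x with ha
  set b := ⨆ x, g x with hb
  rcases eq_or_ne a 0 with ha₀ | ha₀
  · simp [ENNReal.iSup_eq_zero.1 ha₀]
  rcases eq_or_ne b 0 with hb₀ | hb₀
  · simp [ENNReal.iSup_eq_zero.1 hb₀]
  have hab_top : a * b ≠ ∞ := ENNReal.mul_ne_top hf_top hg_top
  obtain ⟨c, hc⟩ : ∃ c : ℝ≥0∞, c ^ 2 = a * b :=
    ⟨(a * b) ^ (2⁻¹ : ℝ), by rw [← ENNReal.rpow_natCast, ← ENNReal.rpow_mul]; norm_num⟩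
  -- `b * f` and `a * g` have the same supremum, and their geometric mean is at most `c * h`.
  have hmin : ∀ x y, min (b * f x) (a * g y) ≤ c * h (midpoint ℝ x y) := fun x y => by
    refine (ENNReal.pow_le_pow_left_iff two_ne_zero).1 ?_
    calc min (b * f x) (a * g y) ^ 2 ≤ (b * f x) * (a * g y) := by
          rw [sq]; gcongr; exacts [min_le_left _ _, min_le_right _ _]
      _ = c ^ 2 * (f x * g y) := by rw [hc]; ring
      _ ≤ c ^ 2 * h (midpoint ℝ x y) ^ 2 := by gcongr; exact hfgh x y
      _ = (c * h (midpoint ℝ x y)) ^ 2 := (mul_pow _ _ _).symm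
  have hadd : b * (∫⁻ x, f x) + a * ∫⁻ x, g x ≤ 2 * (c * ∫⁻ x, h x) := by
    rw [← lintegral_const_mul _ hf, ← lintegral_const_mul _ hg, ← lintegral_const_mul _ hh]
    refine lintegral_add_le_two_mul_of_min_le (hf.const_mul b) (hg.const_mul a) (hh.const_mul c)
      ?_ ?_ hmin
    · rw [← ENNReal.mul_iSup, ← ENNReal.mul_iSup, ← ha, ← hb, mul_comm]
    · rwa [← ENNReal.mul_iSup, ← ha, mul_comm]
  refine (ENNReal.mul_le_mul_iff_right (a := 4 * (a * b)) (by simp [ha₀, hb₀])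
    (ENNReal.mul_ne_top (by simp) hab_top)).1 ?_
  calc 4 * (a * b) * ((∫⁻ x, f x) * ∫⁻ x, g x)
      = 4 * (b * ∫⁻ x, f x) * (a * ∫⁻ x, g x) := by ring
    _ ≤ (b * (∫⁻ x, f x) + a * ∫⁻ x, g x) ^ 2 := ennreal_four_mul_le_sq_add _ _
    _ ≤ (2 * (c * ∫⁻ x, h x)) ^ 2 := by gcongr
    _ = 4 * (a * b) * (∫⁻ x, h x) ^ 2 := by rw [mul_pow, mul_pow, hc]; ring

lemma lintegral_eq_iSup_lintegral_min_natCast {α : Type*} [MeasurableSpace α] (μ : Measure α)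
    {u : α → ℝ≥0∞} (hu : Measurable u) : ∫⁻ x, u x ∂μ = ⨆ N : ℕ, ∫⁻ x, min (u x) N ∂μ := by
  rw [← lintegral_iSup (fun N => hu.min measurable_const)
    fun M N hMN x => min_le_min_left _ (by exact_mod_cast hMN)]
  refine lintegral_congr fun x => ?_
  rw [← inf_iSup_eq, ENNReal.iSup_natCast, inf_top_eq]

lemma midpointPrekopaLeindler_real : MidpointPrekopaLeindler (volume : Measure ℝ) := by
  intro f g h hf hg hh hfgh
  have htop : ∀ (u : ℝ → ℝ≥0∞) (N : ℕ), ⨆ x, min (u x) N ≠ ∞ := fun u N =>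
    ne_top_of_le_ne_top (ENNReal.natCast_ne_top N) (iSup_le fun _ => min_le_right _ _)
  rw [lintegral_eq_iSup_lintegral_min_natCast volume hf,
    lintegral_eq_iSup_lintegral_min_natCast volume hg, ENNReal.iSup_mul]
  refine iSup_le fun M => ?_
  rw [ENNReal.mul_iSup]
  refine iSup_le fun N => ?_
  refine lintegral_mul_lintegral_le_sq_of_iSup_ne_top (hf.min measurable_const)
    (hg.min measurable_const) hh (htop f M) (htop g N) fun x y => le_trans ?_ (hfgh x y)
  gcongr <;> exact min_le_left _ _

namespace MidpointPrekopaLeindler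

variable {E F : Type*} [AddCommGroup E] [Module ℝ E] [MeasurableSpace E]
  [AddCommGroup F] [Module ℝ F] [MeasurableSpace F] {μ : Measure E} {ν : Measure F}

lemma prod [SFinite ν] (hμ : MidpointPrekopaLeindler μ) (hν : MidpointPrekopaLeindler ν) :
    MidpointPrekopaLeindler (μ.prod ν) := by
  intro f g h hf hg hh hfgh
  rw [lintegral_prod _ hf.aemeasurable, lintegral_prod _ hg.aemeasurable,
    lintegral_prod _ hh.aemeasurable]
  refine hμ _ _ _ hf.lintegral_prod_right' hg.lintegral_prod_right' hh.lintegral_prod_right'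
    fun x y => ?_
  exact hν _ _ _ (hf.comp measurable_prodMk_left) (hg.comp measurable_prodMk_left)
    (hh.comp measurable_prodMk_left) fun z w => by
      simpa [midpoint_eq_smul_add] using hfgh (x, z) (y, w)

lemma of_measurePreserving (hμ : MidpointPrekopaLeindler μ) {e : E → F}
    (he : MeasurePreserving e μ ν) (hmid : ∀ x y, e (midpoint ℝ x y) = midpoint ℝ (e x) (e y)) :
    MidpointPrekopaLeindler ν := by
  intro f g h hf hg hh hfgh
  rw [← he.lintegral_comp hf, ← he.lintegral_comp hg, ← he.lintegral_comp hh]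
  exact hμ _ _ _ (hf.comp he.measurable) (hg.comp he.measurable) (hh.comp he.measurable)
    fun x y => by simpa only [comp_apply, hmid] using hfgh (e x) (e y)

lemma smul_measure (hμ : MidpointPrekopaLeindler μ) (c : ℝ≥0) :
    MidpointPrekopaLeindler (c • μ) := by
  intro f g h hf hg hh hfgh
  simp only [lintegral_smul_measure]
  simpa only [smul_mul_smul_comm, smul_pow, sq c] using
    smul_le_smul_of_nonneg_left (hμ f g h hf hg hh hfgh) (zero_le (a := c * c))

end MidpointPrekopaLeindler

lemma midpointPrekopaLeindler_pi (n : ℕ) :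
    MidpointPrekopaLeindler (volume : Measure (Fin n → ℝ)) := by
  induction n with
  | zero =>
    intro f g h _ _ _ hfgh
    rw [Measure.volume_pi_eq_dirac 0]
    simpa [lintegral_dirac] using hfgh 0 0
  | succ n ih =>
    refine (midpointPrekopaLeindler_real.prod ih).of_measurePreserving
      (volume_preserving_piFinSuccAbove (fun _ => ℝ) 0).symm fun x y => ?_
    funext i
    refine Fin.cases ?_ (fun j => ?_) i <;>
      simp [MeasurableEquiv.piFinSuccAbove, midpoint_eq_smul_add, mul_add]

theorem midpointPrekopaLeindler_addHaar {E : Type*} [NormedAddCommGroup E] [NormedSpace ℝ E]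
    [FiniteDimensional ℝ E] [MeasurableSpace E] [BorelSpace E] (μ : Measure E)
    [μ.IsAddHaarMeasure] : MidpointPrekopaLeindler μ := by
  let e : (Fin (finrank ℝ E) → ℝ) ≃L[ℝ] E := ContinuousLinearEquiv.ofFinrankEq (by simp)
  have he : MidpointPrekopaLeindler (volume.map e) :=
    (midpointPrekopaLeindler_pi _).of_measurePreserving
      (e.continuous.measurable.measurePreserving volume) fun x y => by
        simp [midpoint_eq_smul_add]
  rw [Measure.isAddLeftInvariant_eq_smul μ (volume.map e)]
  exact he.smul_measure _

/-- A reverse Hölder inequality: `X` grows at most by a factor `2` from the midpoint of two points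
to its ends, so that Prékopa–Leindler applies to `X ^ 2 * u`, `u` and `2 * X * u`. -/
lemma MidpointPrekopaLeindler.lintegral_sq_mul_lintegral_le {E : Type*} [AddCommGroup E]
    [Module ℝ E] [MeasurableSpace E] {μ : Measure E} (hμ : MidpointPrekopaLeindler μ)
    {u X : E → ℝ≥0∞} (hu : Measurable u) (hX : Measurable X)
    (hu_mid : ∀ x y, u x * u y ≤ u (midpoint ℝ x y) ^ 2)
    (hX_mid : ∀ x y, u x ≠ 0 → u y ≠ 0 → X x ≤ 2 * X (midpoint ℝ x y)) :
    (∫⁻ x, u x * X x ^ 2 ∂μ) * ∫⁻ x, u x ∂μ ≤ 4 * (∫⁻ x, u x * X x ∂μ) ^ 2 := by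
  have hmid : ∀ x y, (u x * X x ^ 2) * u y ≤
      (2 * (u (midpoint ℝ x y) * X (midpoint ℝ x y))) ^ 2 := fun x y => by
    rcases eq_or_ne (u x) 0 with hx | hx
    · simp [hx]
    rcases eq_or_ne (u y) 0 with hy | hy
    · simp [hy]
    calc (u x * X x ^ 2) * u y = u x * u y * X x ^ 2 := by ring
      _ ≤ u (midpoint ℝ x y) ^ 2 * (2 * X (midpoint ℝ x y)) ^ 2 := by
        gcongr
        exacts [hu_mid x y, hX_mid x y hx hy]
      _ = _ := by ring
  calc (∫⁻ x, u x * X x ^ 2 ∂μ) * ∫⁻ x, u x ∂μ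
      ≤ (∫⁻ x, 2 * (u x * X x) ∂μ) ^ 2 :=
        hμ _ _ _ (hu.mul (hX.pow_const 2)) hu ((hu.mul hX).const_mul 2) hmid
    _ = 4 * (∫⁻ x, u x * X x ∂μ) ^ 2 := by
        rw [lintegral_const_mul 2 (show Measurable fun x => u x * X x from hu.mul hX), mul_pow]
        norm_num

end PrekopaLeindler

namespace IsLogConcave

section Module

variable {E : Type*} [AddCommGroup E] [Module ℝ E] {g : E → ℝ}

lemma pos_of_ne_zero (hg : IsLogConcave g) {x : E} (hx : g x ≠ 0) : 0 < g x :=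
  (hg.1 x).lt_of_ne' hx

lemma convex_support (hg : IsLogConcave g) : Convex ℝ (support g) := by
  intro x hx y hy a b ha hb hab
  have hx' := hg.pos_of_ne_zero hx
  have hy' := hg.pos_of_ne_zero hy
  exact ((by positivity : 0 < g x ^ a * g y ^ b).trans_le (hg.2 x y a b ha hb hab)).ne'

lemma mul_le_sq_midpoint (hg : IsLogConcave g) (x y : E) :
    g x * g y ≤ g (midpoint ℝ x y) ^ 2 := by
  have hx := hg.1 x
  have hy := hg.1 y
  calc g x * g y = (g x ^ (2⁻¹ : ℝ) * g y ^ (2⁻¹ : ℝ)) ^ 2 := by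
        rw [← mul_rpow hx hy, ← rpow_mul_natCast (mul_nonneg hx hy)]
        norm_num
    _ ≤ g ((2⁻¹ : ℝ) • x + (2⁻¹ : ℝ) • y) ^ 2 := by
        gcongr
        exact hg.2 x y _ _ (by norm_num) (by norm_num) (by norm_num)
    _ = g (midpoint ℝ x y) ^ 2 := by
        rw [midpoint_eq_smul_add, invOf_eq_inv, smul_add]

lemma indicator (hg : IsLogConcave g) {C : Set E} (hC : Convex ℝ C) :
    IsLogConcave (C.indicator g) := by
  refine ⟨indicator_nonneg fun x _ => hg.1 x, fun x y a b ha hb hab => ?_⟩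
  have hnonneg : 0 ≤ C.indicator g (a • x + b • y) := indicator_nonneg (fun z _ => hg.1 z) _
  rcases ha.eq_or_lt with rfl | ha'
  · obtain rfl : b = 1 := by linarith
    simp
  rcases hb.eq_or_lt with rfl | hb'
  · obtain rfl : a = 1 := by linarith
    simp
  by_cases hx : x ∈ C
  swap
  · simpa [hx, zero_rpow ha'.ne'] using hnonneg
  by_cases hy : y ∈ C
  swap
  · simpa [hy, zero_rpow hb'.ne'] using hnonneg
  simpa [hx, hy, hC hx hy ha hb hab] using hg.2 x y a b ha hb hab

lemma concaveOn_log (hg : IsLogConcave g) : ConcaveOn ℝ (support g) fun x => log (g x) := by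
  refine ⟨hg.convex_support, fun x hx y hy a b ha hb hab => ?_⟩
  have hx' := hg.pos_of_ne_zero hx
  have hy' := hg.pos_of_ne_zero hy
  calc a • log (g x) + b • log (g y) = log (g x ^ a * g y ^ b) := by
        rw [log_mul (by positivity) (by positivity), log_rpow hx', log_rpow hy', smul_eq_mul,
          smul_eq_mul]
    _ ≤ log (g (a • x + b • y)) := log_le_log (by positivity) (hg.2 x y a b ha hb hab)

end Module

variable {E : Type*} [NormedAddCommGroup E] [NormedSpace ℝ E] [FiniteDimensional ℝ E] {g : E → ℝ}

lemma continuousOn_interior_support (hg : IsLogConcave g) :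
    ContinuousOn g (interior (support g)) :=
  hg.concaveOn_log.continuousOn_interior.rexp.congr fun _ hx =>
    (exp_log (hg.pos_of_ne_zero (interior_subset hx))).symm

lemma measurable_indicator [MeasurableSpace E] [BorelSpace E] (hg : IsLogConcave g) {C : Set E}
    (hC : MeasurableSet C) (hCg : C ⊆ interior (support g)) : Measurable (C.indicator g) := by
  classical
  rw [← piecewise_eq_indicator]
  exact (hg.continuousOn_interior_support.mono hCg).measurable_piecewise continuousOn_const hC

lemma ae_mem_interior_support [MeasurableSpace E] [BorelSpace E] (μ : Measure E)
    [μ.IsAddHaarMeasure] (hg : IsLogConcave g) : ∀ᵐ x ∂μ, g x ≠ 0 → x ∈ interior (support g) :=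
  (interior_ae_eq_of_null_frontier (hg.convex_support.addHaar_frontier μ)).mem_iff.mono
    fun _ hx => hx.2

end IsLogConcave

/-- The measure with density `p` with respect to `μ`; negative values of `p` count as `0`. -/
def densityMeasure {E : Type*} [MeasurableSpace E] (μ : Measure E) (p : E → ℝ) : Measure E :=
  μ.withDensity fun x => ENNReal.ofReal (p x)

section DensityMeasure

variable {E : Type*} [MeasurableSpace E] {μ : Measure E} {p : E → ℝ}

lemma isProbabilityMeasure_densityMeasure (hp₀ : ∀ x, 0 ≤ p x) (hp₁ : ∫ x, p x ∂μ = 1) :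
    IsProbabilityMeasure (densityMeasure μ p) := by
  have hp : Integrable p μ := .of_integral_ne_zero (by simp [hp₁])
  refine ⟨?_⟩
  rw [densityMeasure, withDensity_apply _ .univ, setLIntegral_univ,
    ← ofReal_integral_eq_lintegral_ofReal hp (.of_forall hp₀), hp₁, ENNReal.ofReal_one]

lemma ae_densityMeasure_iff (hp₀ : ∀ x, 0 ≤ p x) (hp : AEMeasurable p μ) {s : E → Prop} :
    (∀ᵐ x ∂densityMeasure μ p, s x) ↔ ∀ᵐ x ∂μ, p x ≠ 0 → s x := by
  simp only [densityMeasure, ae_withDensity_iff' hp.ennreal_ofReal, ne_eq,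
    ENNReal.ofReal_eq_zero, (hp₀ _).ge_iff_eq']

lemma integral_densityMeasure {F : Type*} [NormedAddCommGroup F] [NormedSpace ℝ F]
    (hp₀ : ∀ x, 0 ≤ p x) (hp : AEMeasurable p μ) (f : E → F) :
    ∫ x, f x ∂densityMeasure μ p = ∫ x, p x • f x ∂μ := by
  rw [densityMeasure, integral_withDensity_eq_integral_toReal_smul₀ hp.ennreal_ofReal (by simp)]
  simp only [ENNReal.toReal_ofReal (hp₀ _)]

lemma densityMeasure_le_smul_densityMeasure {p₁ p₂ : E → ℝ} {c : ℝ} (hc : 0 ≤ c)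
    (h : ∀ᵐ x ∂μ, p₁ x ≤ c * p₂ x) :
    densityMeasure μ p₁ ≤ ENNReal.ofReal c • densityMeasure μ p₂ := by
  rw [densityMeasure, densityMeasure, ← withDensity_smul' _ _ ENNReal.ofReal_ne_top]
  refine withDensity_mono ?_
  filter_upwards [h] with x hx
  simpa [← ENNReal.ofReal_mul hc] using ENNReal.ofReal_le_ofReal hx

end DensityMeasure

lemma IsLogConcave.lintegral_sq_mul_measure_univ_le {E : Type*} [NormedAddCommGroup E]
    [NormedSpace ℝ E] [FiniteDimensional ℝ E] [MeasurableSpace E] [BorelSpace E] {μ : Measure E}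
    [μ.IsAddHaarMeasure] {g X : E → ℝ} (hg : IsLogConcave g) (hg_meas : Measurable g)
    (hX : ConcaveOn ℝ univ X) (hX_meas : Measurable X) (hX₀ : ∀ x, g x ≠ 0 → 0 ≤ X x) :
    (∫⁻ x, ENNReal.ofReal (X x) ^ 2 ∂densityMeasure μ g) * densityMeasure μ g univ ≤
      4 * (∫⁻ x, ENNReal.ofReal (X x) ∂densityMeasure μ g) ^ 2 := by
  have hu := hg_meas.ennreal_ofReal
  have hY := hX_meas.ennreal_ofReal
  rw [densityMeasure, withDensity_apply _ .univ, setLIntegral_univ,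
    lintegral_withDensity_eq_lintegral_mul _ hu (hY.pow_const 2),
    lintegral_withDensity_eq_lintegral_mul _ hu hY]
  refine (midpointPrekopaLeindler_addHaar μ).lintegral_sq_mul_lintegral_le hu hY
    (fun x y => ?_) fun x y _ hy => ?_
  · rw [← ENNReal.ofReal_mul (hg.1 x), ← ENNReal.ofReal_pow (hg.1 _)]
    exact ENNReal.ofReal_le_ofReal (hg.mul_le_sq_midpoint x y)
  · have hmid : 2⁻¹ * X x + 2⁻¹ * X y ≤ X (midpoint ℝ x y) := by
      simpa [midpoint_eq_smul_add, smul_add] using hX.2 (mem_univ x) (mem_univ y)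
        (by norm_num : (0 : ℝ) ≤ 2⁻¹) (by norm_num : (0 : ℝ) ≤ 2⁻¹) (by norm_num)
    have hXy : 0 ≤ X y := hX₀ y fun h => hy (by simp [h])
    rw [← ENNReal.ofReal_ofNat 2, ← ENNReal.ofReal_mul zero_le_two]
    exact ENNReal.ofReal_le_ofReal (by linarith)

namespace ApproxLogConcave

variable {E : Type*} {ε : ℝ} {p : E → ℝ}

lemma nonneg [AddCommMonoid E] [SMul ℝ E] (hp : ApproxLogConcave ε p) (hε : 0 < ε) (x : E) :
    0 ≤ p x := by
  obtain ⟨g, hg, hgp⟩ := hp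
  exact (mul_nonneg hε.le (hg.1 x)).trans (hgp x).1

variable [NormedAddCommGroup E] [NormedSpace ℝ E] [FiniteDimensional ℝ E] [MeasurableSpace E]
  [BorelSpace E] {μ : Measure E} [μ.IsAddHaarMeasure]

/-- A log-concave function need not be measurable on the boundary of its support, so the function
witnessing approximate log-concavity is cut off to the interior, which is conull in the support. -/
lemma exists_measurable_isLogConcave (hp : ApproxLogConcave ε p) (hε : 0 < ε) {C : Set E}
    (hC : Convex ℝ C) (hC_meas : MeasurableSet C) (hpC : ∀ᵐ x ∂μ, p x ≠ 0 → x ∈ C) :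
    ∃ g : E → ℝ, IsLogConcave g ∧ Measurable g ∧ support g ⊆ C ∧
      (∀ x, g x ≤ ε⁻¹ * p x) ∧ ∀ᵐ x ∂μ, p x ≤ ε⁻¹ * g x := by
  have hp₀ := hp.nonneg hε
  obtain ⟨g, hg, hgp⟩ := hp
  set S := C ∩ interior (support g)
  refine ⟨S.indicator g, hg.indicator (hC.inter hg.convex_support.interior),
    hg.measurable_indicator (hC_meas.inter isOpen_interior.measurableSet) inter_subset_right,
    support_indicator_subset.trans inter_subset_left, fun x => ?_, ?_⟩
  · refine (indicator_le_self' (fun z _ => hg.1 z) x).trans ?_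
    rw [le_inv_mul_iff₀ hε]
    exact (hgp x).1
  · filter_upwards [hpC, hg.ae_mem_interior_support μ] with x hxC hx
    rcases eq_or_ne (p x) 0 with hpx | hpx
    · rw [hpx]
      exact mul_nonneg (inv_nonneg.2 hε.le) (indicator_nonneg (fun z _ => hg.1 z) x)
    · have hpx_le : p x ≤ ε⁻¹ * g x := by simpa using (hgp x).2
      have hgx : g x ≠ 0 := fun h => hpx (le_antisymm (by simpa [h] using hpx_le) (hp₀ x))
      rwa [indicator_of_mem (show x ∈ S from ⟨hxC hpx, hx hgx⟩)]

lemma exists_dual_lt_of_eq_zero (μ : Measure E) [μ.IsAddHaarMeasure] (hp : ApproxLogConcave ε p)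
    (hε : 0 < ε) {x₀ : E} (hx₀ : p x₀ = 0) :
    ∃ ℓ : StrongDual ℝ E, ∀ᵐ x ∂μ, p x ≠ 0 → ℓ x < ℓ x₀ := by
  have hp₀ := hp.nonneg hε
  obtain ⟨g, hg, hgp⟩ := hp
  have hgx₀ : g x₀ = 0 := by
    have hgx₀_le := (hgp x₀).1
    rw [hx₀] at hgx₀_le
    exact le_antisymm (nonpos_of_mul_nonpos_right hgx₀_le hε) (hg.1 x₀)
  obtain ⟨ℓ, hℓ⟩ := geometric_hahn_banach_open_point hg.convex_support.interior isOpen_interior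
    fun h : x₀ ∈ interior (support g) => interior_subset h hgx₀
  refine ⟨ℓ, (hg.ae_mem_interior_support μ).mono fun x hx hpx => hℓ x (hx fun hgx => hpx ?_)⟩
  exact le_antisymm (by simpa [hgx] using (hgp x).2) (hp₀ x)

lemma lintegral_sq_mul_measure_univ_le (hp : ApproxLogConcave ε p) (hε : 0 < ε)
    (hp_meas : AEMeasurable p μ) {X : E → ℝ} (hX : ConcaveOn ℝ univ X)
    (hX₀ : ∀ᵐ x ∂densityMeasure μ p, 0 ≤ X x) :
    (∫⁻ x, ENNReal.ofReal (X x) ^ 2 ∂densityMeasure μ p) * densityMeasure μ p univ ≤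
      ENNReal.ofReal (4 / ε ^ 4) * (∫⁻ x, ENNReal.ofReal (X x) ∂densityMeasure μ p) ^ 2 := by
  have hX_meas : Measurable X := (continuousOn_univ.1 (hX.continuousOn isOpen_univ)).measurable
  have hC : Convex ℝ {x | 0 ≤ X x} := by simpa using hX.convex_ge 0
  obtain ⟨g, hg, hg_meas, hgC, hgp, hpg⟩ := hp.exists_measurable_isLogConcave hε hC
    (measurableSet_le measurable_const hX_meas)
    ((ae_densityMeasure_iff (hp.nonneg hε) hp_meas).1 hX₀)
  set P := densityMeasure μ p
  set U := densityMeasure μ g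
  set c := ENNReal.ofReal ε⁻¹
  have hPU : P ≤ c • U := densityMeasure_le_smul_densityMeasure (by positivity) hpg
  have hUP : U ≤ c • P := densityMeasure_le_smul_densityMeasure (by positivity) (.of_forall hgp)
  have hc : 4 * c ^ 4 = ENNReal.ofReal (4 / ε ^ 4) := by
    rw [← ENNReal.ofReal_pow (by positivity), ← ENNReal.ofReal_ofNat 4,
      ← ENNReal.ofReal_mul (by positivity), inv_pow, div_eq_mul_inv]
  calc (∫⁻ x, ENNReal.ofReal (X x) ^ 2 ∂P) * P univ
      ≤ (∫⁻ x, ENNReal.ofReal (X x) ^ 2 ∂(c • U)) * (c • U) univ := by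
        gcongr
    _ = c ^ 2 * ((∫⁻ x, ENNReal.ofReal (X x) ^ 2 ∂U) * U univ) := by
        rw [lintegral_smul_measure, Measure.smul_apply, smul_eq_mul, smul_eq_mul]
        ring
    _ ≤ c ^ 2 * (4 * (∫⁻ x, ENNReal.ofReal (X x) ∂U) ^ 2) := by
        refine mul_le_mul_right ?_ _
        exact hg.lintegral_sq_mul_measure_univ_le hg_meas hX hX_meas fun x hx => hgC hx
    _ ≤ c ^ 2 * (4 * (∫⁻ x, ENNReal.ofReal (X x) ∂(c • P)) ^ 2) := by
        gcongr
    _ = ENNReal.ofReal (4 / ε ^ 4) * (∫⁻ x, ENNReal.ofReal (X x) ∂P) ^ 2 := by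
        rw [lintegral_smul_measure, smul_eq_mul, ← hc]
        ring

lemma integral_sq_le [IsProbabilityMeasure (densityMeasure μ p)] (hp : ApproxLogConcave ε p)
    (hε : 0 < ε) (hp_meas : AEMeasurable p μ) {X : E → ℝ} (hX : ConcaveOn ℝ univ X)
    (hX₀ : ∀ᵐ x ∂densityMeasure μ p, 0 ≤ X x) (hX_mem : MemLp X 2 (densityMeasure μ p)) :
    ∫ x, X x ^ 2 ∂densityMeasure μ p ≤ 4 / ε ^ 4 * (∫ x, X x ∂densityMeasure μ p) ^ 2 := by
  have h := hp.lintegral_sq_mul_measure_univ_le hε hp_meas hX hX₀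
  have hsq : ∫⁻ x, ENNReal.ofReal (X x) ^ 2 ∂densityMeasure μ p =
      ∫⁻ x, ENNReal.ofReal (X x ^ 2) ∂densityMeasure μ p :=
    lintegral_congr_ae (hX₀.mono fun x hx => (ENNReal.ofReal_pow hx 2).symm)
  have hint_nonneg : 0 ≤ ∫ x, X x ∂densityMeasure μ p := integral_nonneg_of_ae hX₀
  rw [measure_univ, mul_one, hsq,
    ← ofReal_integral_eq_lintegral_ofReal hX_mem.integrable_sq (.of_forall fun _ => sq_nonneg _),
    ← ofReal_integral_eq_lintegral_ofReal (hX_mem.integrable one_le_two) hX₀,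
    ← ENNReal.ofReal_pow hint_nonneg, ← ENNReal.ofReal_mul (by positivity)] at h
  exact (ENNReal.ofReal_le_ofReal_iff (by positivity)).1 h

theorem exists_dual_variance_le [IsProbabilityMeasure (densityMeasure μ p)]
    (hp : ApproxLogConcave ε p) (hε : 0 < ε) (hp_meas : AEMeasurable p μ)
    (hid : MemLp id 2 (densityMeasure μ p)) {x₀ : E} (hx₀ : p x₀ = 0) :
    ∃ ℓ : StrongDual ℝ E, ℓ ≠ 0 ∧ Var[ℓ; densityMeasure μ p] ≤
      (4 / ε ^ 4 - 1) * ℓ (x₀ - ∫ x, x ∂densityMeasure μ p) ^ 2 := by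
  obtain ⟨ℓ, hℓ⟩ := hp.exists_dual_lt_of_eq_zero μ hε hx₀
  set P := densityMeasure μ p
  replace hℓ : ∀ᵐ x ∂P, ℓ x < ℓ x₀ := (ae_densityMeasure_iff (hp.nonneg hε) hp_meas).2 hℓ
  have hℓ_mem : MemLp ℓ 2 P := ℓ.comp_memLp' hid
  have hX : ConcaveOn ℝ univ fun x => ℓ x₀ - ℓ x :=
    (concaveOn_const _ convex_univ).sub (ℓ.toLinearMap.convexOn convex_univ)
  have hX_mem : MemLp (fun x => ℓ x₀ - ℓ x) 2 P := (memLp_const _).sub hℓ_mem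
  have hmean : ∫ x, (ℓ x₀ - ℓ x) ∂P = ℓ (x₀ - ∫ x, x ∂P) := by
    rw [integral_sub (integrable_const _) (hℓ_mem.integrable one_le_two),
      integral_const, probReal_univ, one_smul, map_sub]
    congr 1
    exact ℓ.integral_comp_comm (hid.integrable one_le_two)
  refine ⟨ℓ, ?_, ?_⟩
  · rintro rfl
    obtain ⟨x, hx⟩ := hℓ.exists
    exact lt_irrefl _ hx
  · have hsq := hp.integral_sq_le hε hp_meas hX (hℓ.mono fun x hx => (sub_pos.2 hx).le) hX_mem
    rw [← variance_const_sub hℓ_mem.aestronglyMeasurable (ℓ x₀), variance_eq_sub hX_mem, hmean]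
    rw [hmean] at hsq
    simp only [Pi.pow_apply]
    linarith

end ApproxLogConcave

section Covariance

open WithLp

lemma dotProduct_sq_le_of_posDef {ι : Type*} [Fintype ι] [DecidableEq ι] {A : Matrix ι ι ℝ}
    (hA : A.PosDef) (θ v : ι → ℝ) : (θ ⬝ᵥ v) ^ 2 ≤ (θ ⬝ᵥ A *ᵥ θ) * (v ⬝ᵥ A⁻¹ *ᵥ v) := by
  have hAv : A *ᵥ A⁻¹ *ᵥ v = v := by
    rw [Matrix.mulVec_mulVec,
      Matrix.mul_nonsing_inv _ ((Matrix.isUnit_iff_isUnit_det _).1 hA.isUnit), Matrix.one_mulVec]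
  have hsymm : (Matrix.toBilin' A).IsSymm :=
    Matrix.isSymm_toBilin'_iff_isSymm.2 (by simpa using hA.isHermitian)
  simpa only [Matrix.toBilin'_apply', hAv, dotProduct_comm (A⁻¹ *ᵥ v) v] using
    LinearMap.BilinForm.apply_sq_le_of_symm (Matrix.toBilin' A)
      (fun w => by simpa [Matrix.toBilin'_apply'] using hA.posSemidef.dotProduct_mulVec_nonneg w)
      ⟨hsymm.eq⟩ θ (A⁻¹ *ᵥ v)

lemma inner_sq_le_of_mahal_inv_le {n : ℕ} {A : Matrix (Fin n) (Fin n) ℝ} (hA : A.PosDef)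
    (θ : EuclideanSpace ℝ (Fin n)) {v : EuclideanSpace ℝ (Fin n)} {r : ℝ}
    (hv : mahal n A⁻¹ v ≤ r) : inner ℝ θ v ^ 2 ≤ r ^ 2 * (ofLp θ ⬝ᵥ A *ᵥ ofLp θ) := by
  have hmahal : mahal n A⁻¹ v = √(ofLp v ⬝ᵥ A⁻¹ *ᵥ ofLp v) := by
    simp only [mahal, dotProduct, Matrix.mulVec, Finset.mul_sum, mul_assoc]
  have hθ : 0 ≤ ofLp θ ⬝ᵥ A *ᵥ ofLp θ := by
    simpa using hA.posSemidef.dotProduct_mulVec_nonneg (ofLp θ)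
  calc inner ℝ θ v ^ 2 = (ofLp θ ⬝ᵥ ofLp v) ^ 2 := by
        rw [EuclideanSpace.inner_eq_star_dotProduct, star_trivial, dotProduct_comm]
    _ ≤ (ofLp θ ⬝ᵥ A *ᵥ ofLp θ) * (ofLp v ⬝ᵥ A⁻¹ *ᵥ ofLp v) := dotProduct_sq_le_of_posDef hA _ _
    _ ≤ (ofLp θ ⬝ᵥ A *ᵥ ofLp θ) * r ^ 2 := by
        gcongr
        exact (sqrt_le_left ((sqrt_nonneg _).trans (hmahal ▸ hv))).1 (hmahal ▸ hv)
    _ = r ^ 2 * (ofLp θ ⬝ᵥ A *ᵥ ofLp θ) := mul_comm _ _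

variable {n : ℕ} {p : EuclideanSpace ℝ (Fin n) → ℝ}

lemma densMean_eq_integral_densityMeasure (hp₀ : ∀ x, 0 ≤ p x) (hp : AEMeasurable p) :
    densMean n p = ∫ x, x ∂densityMeasure volume p :=
  (integral_densityMeasure hp₀ hp _).symm

lemma densCov_eq_integral_densityMeasure (hp₀ : ∀ x, 0 ≤ p x) (hp : AEMeasurable p) (i j : Fin n) :
    densCov n p i j =
      ∫ x, (x i - densMean n p i) * (x j - densMean n p j) ∂densityMeasure volume p :=
  (integral_densityMeasure hp₀ hp _).symm

lemma memLp_id_densityMeasure [IsProbabilityMeasure (densityMeasure volume p)]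
    (hp₀ : ∀ x, 0 ≤ p x) (hp : AEMeasurable p) (hcov : ∀ i, densCov n p i i ≠ 0) :
    MemLp id 2 (densityMeasure volume p) := by
  refine MemLp.of_eval_piLp fun i => ?_
  have hcenter : MemLp (fun x => x i - densMean n p i) 2 (densityMeasure volume p) := by
    refine (memLp_two_iff_integrable_sq (by fun_prop)).2 ?_
    -- The Bochner integral of a non-integrable function is `0`.
    refine .of_integral_ne_zero ?_
    simpa only [sq, densCov_eq_integral_densityMeasure hp₀ hp] using hcov i
  simpa [Pi.add_def] using hcenter.add (memLp_const (densMean n p i))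

lemma variance_inner_densityMeasure [IsProbabilityMeasure (densityMeasure volume p)]
    (hp₀ : ∀ x, 0 ≤ p x) (hp : AEMeasurable p) (hid : MemLp id 2 (densityMeasure volume p))
    (θ : EuclideanSpace ℝ (Fin n)) :
    Var[fun x => inner ℝ θ x; densityMeasure volume p] = ofLp θ ⬝ᵥ densCov n p *ᵥ ofLp θ := by
  set P := densityMeasure volume p
  have hcoord : ∀ i, MemLp (fun x : EuclideanSpace ℝ (Fin n) => x i) 2 P := hid.eval_piLp
  have hmean : ∀ i, densMean n p i = ∫ x, x i ∂P := fun i => by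
    rw [densMean_eq_integral_densityMeasure hp₀ hp,
      eval_integral_piLp fun j => (hcoord j).integrable one_le_two]
  have hcov : ∀ i j, cov[fun x => x i, fun x => x j; P] = densCov n p i j := fun i j => by
    rw [covariance, densCov_eq_integral_densityMeasure hp₀ hp, hmean, hmean]
  have hsum := covarianceBilin_apply_pi hcoord θ θ
  simp only [toLp_ofLp, Measure.map_id', covarianceBilin_self hid, hcov] at hsum
  simp only [hsum, dotProduct, Matrix.mulVec, Finset.mul_sum]
  exact Finset.sum_congr rfl fun i _ => Finset.sum_congr rfl fun j _ => by ring

lemma ApproxLogConcave.exists_dotProduct_densCov_mulVec_le {ε : ℝ} (hp : ApproxLogConcave ε p)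
    (hε : 0 < ε) (hp₁ : ∫ x, p x = 1) (hcov : ∀ i, densCov n p i i ≠ 0)
    {x₀ : EuclideanSpace ℝ (Fin n)} (hx₀ : p x₀ = 0) :
    ∃ θ : EuclideanSpace ℝ (Fin n), θ ≠ 0 ∧ ofLp θ ⬝ᵥ densCov n p *ᵥ ofLp θ ≤
      (4 / ε ^ 4 - 1) * inner ℝ θ (x₀ - densMean n p) ^ 2 := by
  have hp₀ := hp.nonneg hε
  have hp_meas : AEMeasurable p := (Integrable.of_integral_ne_zero (by simp [hp₁])).aemeasurable
  have := isProbabilityMeasure_densityMeasure hp₀ hp₁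
  have hid := memLp_id_densityMeasure hp₀ hp_meas hcov
  obtain ⟨ℓ, hℓ, hvar⟩ := hp.exists_dual_variance_le hε hp_meas hid hx₀
  obtain ⟨θ, rfl⟩ := (InnerProductSpace.toDual ℝ _).surjective ℓ
  refine ⟨θ, by simpa using hℓ, ?_⟩
  rw [← variance_inner_densityMeasure hp₀ hp_meas hid,
    densMean_eq_integral_densityMeasure hp₀ hp_meas]
  exact hvar

end Covariance

theorem ellipsoid_in_support_general (n : ℕ) (q : EuclideanSpace ℝ (Fin n) → ℝ) {ε r : ℝ}
    (hε : 0 < ε) (hr : 2 * r ≤ ε ^ 2) (hq₁ : ∫ x, q x = 1) (hq : ApproxLogConcave ε q)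
    (hcov : (densCov n q).PosDef) :
    {x | mahal n (densCov n q)⁻¹ (x - densMean n q) ≤ r} ⊆ support q := by
  intro x₀ hx₀ hqx₀
  obtain ⟨θ, hθ, hσ_le⟩ := hq.exists_dotProduct_densCov_mulVec_le hε hq₁
    (fun _ => hcov.diag_pos.ne') hqx₀
  have hm_le := inner_sq_le_of_mahal_inv_le hcov θ hx₀
  have hσ : 0 < θ.ofLp ⬝ᵥ densCov n q *ᵥ θ.ofLp := by
    simpa using hcov.dotProduct_mulVec_pos (x := θ.ofLp) (by simpa using hθ)
  set σ := θ.ofLp ⬝ᵥ densCov n q *ᵥ θ.ofLp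
  set m : ℝ := inner ℝ θ (x₀ - densMean n q)
  have hr_sq : 4 * r ^ 2 ≤ ε ^ 4 := by
    have hr₀ : 0 ≤ r := (sqrt_nonneg _).trans hx₀
    calc 4 * r ^ 2 = (2 * r) ^ 2 := by ring
      _ ≤ (ε ^ 2) ^ 2 := by gcongr
      _ = ε ^ 4 := by ring
  have hm_le_σ : 4 / ε ^ 4 * m ^ 2 ≤ σ :=
    calc 4 / ε ^ 4 * m ^ 2 ≤ 4 / ε ^ 4 * (r ^ 2 * σ) := by gcongr
      _ = 4 * r ^ 2 / ε ^ 4 * σ := by ring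
      _ ≤ 1 * σ := by gcongr; exact div_le_one_of_le₀ hr_sq (by positivity)
      _ = σ := one_mul σ
  have hm : m ^ 2 = 0 := le_antisymm (by linarith) (sq_nonneg m)
  rw [hm, mul_zero] at hσ_le
  exact hσ.not_ge hσ_le

/-- **Lemma 7.1.** The ellipsoid `𝓔_q(1/100)` is contained in the support of any
`(1/e)`-approximately log-concave probability density `q`. -/
theorem ellipsoid_in_support
    (n : ℕ) (q : EuclideanSpace ℝ (Fin n) → ℝ)
    (hq0 : ∀ x, 0 ≤ q x) (hq1 : ∫ x, q x = 1)
    (hqlc : ApproxLogConcave (1 / Real.exp 1) q)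
    (hcov : (densCov n q).PosDef) :
    {x | mahal n (densCov n q)⁻¹ (x - densMean n q) ≤ 1 / 100} ⊆ Function.support q := by
  refine ellipsoid_in_support_general n q (by positivity) ?_ hq1 hqlc hcov
  calc 2 * (1 / 100) ≤ (1 / 3 : ℝ) ^ 2 := by norm_num
    _ ≤ (1 / Real.exp 1) ^ 2 := by gcongr; exact exp_one_lt_three.le
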